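/- Every star decomposable pure simplicial complex is vertex decomposable. -/

import Mathlib

/-! Common definitions: finite abstract simplicial complexes, links, stars,
barycentric subdivision, joins, collapsibility, shellability, vertex
decomposability, star decomposability (also "in vertices"), and simplicial
homology (reduced, over ℤ and ℤ₂). -/

namespace Paper

open Finset

variable {V : Type*} [DecidableEq V]

/-- `K` is a (finite, abstract) simplicial complex: downward closed family of finsets. -/
def IsCplx (K : Finset (Finset V)) : Prop :=
  ∀ σ ∈ K, ∀ τ ⊆ σ, τ ∈ K

/-- Vertex set of a complex. -/
def verts (K : Finset (Finset V)) : Finset V := K.sup id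

/-- Dimension of a complex (as an integer; `-1` for `∅` and `{∅}`). -/
def dim (K : Finset (Finset V)) : ℤ := ((K.sup Finset.card : ℕ) : ℤ) - 1

/-- The facets (inclusion-maximal faces) of `K`. -/
def facets (K : Finset (Finset V)) : Finset (Finset V) :=
  K.filter fun σ => ∀ τ ∈ K, σ ⊆ τ → σ = τ

/-- `K` is pure `d`-dimensional: it is nonempty, every face has dimension at most `d`
and every face is contained in a face of dimension exactly `d`. -/
def PureDim (K : Finset (Finset V)) (d : ℤ) : Prop :=
  K.Nonempty ∧ (∀ σ ∈ K, (σ.card : ℤ) ≤ d + 1) ∧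
    ∀ σ ∈ K, ∃ τ ∈ K, σ ⊆ τ ∧ (τ.card : ℤ) = d + 1

/-- Link of a face. -/
def lk (σ : Finset V) (K : Finset (Finset V)) : Finset (Finset V) :=
  (K.filter fun τ => σ ⊆ τ).image fun τ => τ \ σ

/-- Closed star of a face. -/
def star (σ : Finset V) (K : Finset (Finset V)) : Finset (Finset V) :=
  K.filter fun τ => τ ∪ σ ∈ K

/-- Union of the closed stars of a set of vertices. -/
def starSet (S : Finset V) (K : Finset (Finset V)) : Finset (Finset V) :=
  K.filter fun τ => ∃ v ∈ S, τ ∪ {v} ∈ K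

/-- Subcomplex induced on a vertex set `S`. -/
def induced (S : Finset V) (K : Finset (Finset V)) : Finset (Finset V) :=
  K.filter fun σ => σ ⊆ S

/-- Deletion of a vertex:  `K - v`. -/
def deleteV (v : V) (K : Finset (Finset V)) : Finset (Finset V) :=
  K.filter fun σ => v ∉ σ

/-- The full simplex on vertex set `σ`. -/
def simplexCplx (σ : Finset V) : Finset (Finset V) := σ.powerset

/-- The boundary `∂σ` of the simplex on `σ`: all proper subsets of `σ`. -/
def bdSimplex (σ : Finset V) : Finset (Finset V) := σ.powerset.erase σ

/-- Barycentric subdivision: vertices are the nonempty faces of `K`, faces are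
chains of nonempty faces of `K`. -/
def sd (K : Finset (Finset V)) : Finset (Finset (Finset V)) :=
  if K = ∅ then ∅ else
    K.powerset.filter fun c => (∅ ∉ c) ∧ ∀ σ ∈ c, ∀ τ ∈ c, σ ⊆ τ ∨ τ ⊆ σ

/-- Join of two simplicial complexes (on the disjoint union of vertex types). -/
def join {α β : Type*} [DecidableEq α] [DecidableEq β]
    (X : Finset (Finset α)) (Y : Finset (Finset β)) : Finset (Finset (α ⊕ β)) :=
  (X ×ˢ Y).image fun p => p.1.image Sum.inl ∪ p.2.image Sum.inr

/-- `K'` arises from `K` by an elementary collapse: remove a free face `σ`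
together with the unique face `τ` properly containing it. -/
def ElemCollapse (K K' : Finset (Finset V)) : Prop :=
  ∃ σ ∈ K, ∃ τ ∈ K, σ ⊂ τ ∧ (∀ ρ ∈ K, σ ⊂ ρ → ρ = τ) ∧ K' = (K.erase σ).erase τ

/-- `K` collapses to `K'`. -/
def CollapsesTo (K K' : Finset (Finset V)) : Prop :=
  Relation.ReflTransGen ElemCollapse K K'

/-- `K` is collapsible: it collapses to a single vertex. -/
def Collapsible (K : Finset (Finset V)) : Prop :=
  ∃ w : V, CollapsesTo K ({∅, {w}} : Finset (Finset V))

/-- The removal-collapsibility condition: `K` is empty, or becomes collapsible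
after removal of a set of facets. -/
def RC (K : Finset (Finset V)) : Prop :=
  K = ∅ ∨ ∃ F ⊆ facets K, Collapsible (K \ F)

/-- The hereditary removal-collapsibility condition: the link of every face
(including the empty face, whose link is `K` itself) satisfies (RC). -/
def HRC (K : Finset (Finset V)) : Prop :=
  ∀ σ ∈ K, RC (lk σ K)

/-- `K` is shellable: there is a total order of its facets such that each facet
meets the union of the previous ones in a pure complex of codimension one. -/
def Shellable (K : Finset (Finset V)) : Prop :=
  ∃ L : List (Finset V), L.Nodup ∧ L.toFinset = facets K ∧
    ∀ i : ℕ, (hi : i < L.length) → 1 ≤ i →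
      PureDim ((L.get ⟨i, hi⟩).powerset ∩ ((L.take i).map Finset.powerset).foldr (· ∪ ·) ∅)
        (((L.get ⟨i, hi⟩).card : ℤ) - 2)

/-- Vertex decomposability (Provan–Billera) of a pure complex. -/
inductive VD : Finset (Finset V) → Prop
  | simplex (σ : Finset V) : VD σ.powerset
  | shed (K : Finset (Finset V)) (v : V) (hv : {v} ∈ K)
      (hdel : PureDim (deleteV v K) (dim K)) (hVDdel : VD (deleteV v K))
      (hlk : PureDim (lk {v} K) (dim K - 1)) (hVDlk : VD (lk {v} K)) : VD K

/-- `L` is a shedding order of `K` (a total order on `V(K)`, given as a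
duplicate-free list, witnessing vertex decomposability; once a simplex is
reached, an arbitrary order of its vertices qualifies). -/
inductive SheddingOrder : List V → Finset (Finset V) → Prop
  | simplex (σ : Finset V) (L : List V) (hnd : L.Nodup) (hfin : L.toFinset = σ) :
      SheddingOrder L σ.powerset
  | cons (v : V) (L : List V) (K : Finset (Finset V)) (hv : {v} ∈ K) (hvL : v ∉ L)
      (hcov : insert v L.toFinset = verts K)
      (hdel : PureDim (deleteV v K) (dim K))
      (hrest : SheddingOrder L (deleteV v K))
      (hlk : PureDim (lk {v} K) (dim K - 1)) (hVDlk : VD (lk {v} K)) :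
      SheddingOrder (v :: L) K

/-- `W` induces a star partition of `X`: the stars of the vertices of `W`
cover `X` and no two distinct vertices of `W` lie in a common face. -/
def StarPartition (W : Finset V) (X : Finset (Finset V)) : Prop :=
  (∀ σ ∈ X, ∃ w ∈ W, σ ∪ {w} ∈ X) ∧
    ∀ w₁ ∈ W, ∀ w₂ ∈ W, w₁ ≠ w₂ → ¬∃ σ ∈ X, w₁ ∈ σ ∧ w₂ ∈ σ

/-- The overlap `O_X(x, W') = lk(x,X) ∩ st(W',X)`. -/
def overlap (X : Finset (Finset V)) (x : V) (W' : Finset V) : Finset (Finset V) :=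
  lk {x} X ∩ starSet W' X

/-- Star decomposability of the pair `(X, X₀)`.  The total order on the set `W`
inducing the star partition is encoded as a duplicate-free list `L` (earlier in
the list = smaller in the order). -/
inductive StarDec : Finset (Finset V) → Finset V → Prop
  | base : StarDec ({∅} : Finset (Finset V)) (∅ : Finset V)
  | step (X : Finset (Finset V)) (X₀ : Finset V) (k : ℤ) (hk : 0 ≤ k) (hpure : PureDim X k)
      (L : List V) (hne : L ≠ []) (hnd : L.Nodup) (hsub : L.toFinset ⊆ verts X)
      (hsp : StarPartition L.toFinset X)
      (horder : ∃ i < L.length, X₀ = (L.drop i).toFinset)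
      (U : ℕ → Finset V)
      (hUne : ∀ i, i + 1 < L.length → (U i).Nonempty)
      (hUsub : ∀ i, (hi : i + 1 < L.length) →
        U i ⊆ verts (lk {L.get ⟨i, Nat.lt_of_succ_lt hi⟩} X))
      (hUst : ∀ i, (hi : i + 1 < L.length) →
        starSet (U i) (lk {L.get ⟨i, Nat.lt_of_succ_lt hi⟩} X) =
          overlap X (L.get ⟨i, Nat.lt_of_succ_lt hi⟩) ((L.drop (i + 1)).toFinset))
      (hlink : ∀ i, (hi : i + 1 < L.length) →
        StarDec (lk {L.get ⟨i, Nat.lt_of_succ_lt hi⟩} X) (U i))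
      (Ulast : Finset V)
      (hlast : StarDec (lk {L.getLast hne} X) Ulast) :
      StarDec X X₀

/-- The order encoded by the list `L` induces a star decomposition of `(X, X₀)`. -/
def InducesStarDecomp (L : List V) (X : Finset (Finset V)) (X₀ : Finset V) : Prop :=
  (L = [] ∧ X = ({∅} : Finset (Finset V)) ∧ X₀ = ∅) ∨
  ∃ hne : L ≠ [], L.Nodup ∧ StarPartition L.toFinset X ∧
    (∃ i < L.length, X₀ = (L.drop i).toFinset) ∧
    (∀ i, (hi : i + 1 < L.length) →
      ∃ U : Finset V, U.Nonempty ∧ U ⊆ verts (lk {L.get ⟨i, Nat.lt_of_succ_lt hi⟩} X) ∧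
        starSet U (lk {L.get ⟨i, Nat.lt_of_succ_lt hi⟩} X) =
          overlap X (L.get ⟨i, Nat.lt_of_succ_lt hi⟩) ((L.drop (i + 1)).toFinset) ∧
        StarDec (lk {L.get ⟨i, Nat.lt_of_succ_lt hi⟩} X) U) ∧
    (∃ U : Finset V, StarDec (lk {L.getLast hne} X) U)

/-- Star decomposability *in vertices* of the pair `(sd Y, Y₀)`; the data is the
underlying complex `Y` together with `Y₀ ⊆ V(Y)`.  The total order on `V(Y)` is
encoded as a duplicate-free list `L`. -/
inductive StarDecV : Finset (Finset V) → Finset V → Prop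
  | base : StarDecV ({∅} : Finset (Finset V)) (∅ : Finset V)
  | step (Y : Finset (Finset V)) (Y₀ : Finset V) (k : ℤ) (hk : 0 ≤ k) (hpure : PureDim Y k)
      (L : List V) (hne : L ≠ []) (hnd : L.Nodup) (hV : L.toFinset = verts Y)
      (horder : ∃ i < L.length, Y₀ = (L.drop i).toFinset)
      (hlink : ∀ i, (hi : i + 1 < L.length) →
        StarDecV (lk {L.get ⟨i, Nat.lt_of_succ_lt hi⟩} Y)
          (verts (lk {L.get ⟨i, Nat.lt_of_succ_lt hi⟩} Y) ∩ (L.drop (i + 1)).toFinset))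
      (hlast : StarDecV (lk {L.getLast hne} Y) (verts (lk {L.getLast hne} Y))) :
      StarDecV Y Y₀

/-- The order encoded by the list `L` induces a star decomposition of
`(sd Y, Y₀)` in vertices. -/
def InducesStarDecompV (L : List V) (Y : Finset (Finset V)) (Y₀ : Finset V) : Prop :=
  (L = [] ∧ Y = ({∅} : Finset (Finset V)) ∧ Y₀ = ∅) ∨
  ∃ hne : L ≠ [], L.Nodup ∧ L.toFinset = verts Y ∧
    (∃ i < L.length, Y₀ = (L.drop i).toFinset) ∧
    (∀ i, (hi : i + 1 < L.length) →
      StarDecV (lk {L.get ⟨i, Nat.lt_of_succ_lt hi⟩} Y)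
        (verts (lk {L.get ⟨i, Nat.lt_of_succ_lt hi⟩} Y) ∩ (L.drop (i + 1)).toFinset)) ∧
    StarDecV (lk {L.getLast hne} Y) (verts (lk {L.getLast hne} Y))

/-- Simplicial isomorphism between two complexes. -/
def SimpIso {α β : Type*} [DecidableEq α] [DecidableEq β]
    (K : Finset (Finset α)) (L : Finset (Finset β)) : Prop :=
  ∃ f : α → β, Set.InjOn f ↑(verts K) ∧ K.image (fun σ => σ.image f) = L

/-- Simplicial isomorphism of pairs (complex, subcomplex). -/
def SimpIsoPair {α β : Type*} [DecidableEq α] [DecidableEq β]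
    (K K₁ : Finset (Finset α)) (L L₁ : Finset (Finset β)) : Prop :=
  ∃ f : α → β, Set.InjOn f ↑(verts K) ∧ K.image (fun σ => σ.image f) = L ∧
    K₁.image (fun σ => σ.image f) = L₁

/-! Reduced simplicial homology (the empty face is included, so the chain
complex below, graded by cardinality of faces, computes *reduced* homology). -/

/-- Faces of `K` of cardinality `n`. -/
def kfaces (K : Finset (Finset V)) (n : ℕ) : Finset (Finset V) :=
  K.filter fun σ => σ.card = n

/-- The mod 2 boundary operator, from chains on faces of cardinality `n+1`
to chains on faces of cardinality `n`. -/
noncomputable def bdry2 (K : Finset (Finset V)) (n : ℕ) :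
    (↥(kfaces K (n + 1)) → ZMod 2) →ₗ[ZMod 2] (↥(kfaces K n) → ZMod 2) :=
  Matrix.mulVecLin (Matrix.of fun (τ : ↥(kfaces K n)) (σ : ↥(kfaces K (n + 1))) =>
    if (τ : Finset V) ⊆ (σ : Finset V) then (1 : ZMod 2) else 0)

/-- The reduced Betti number `β̃ᵢ(K; ℤ₂)`. -/
noncomputable def betti2 (K : Finset (Finset V)) (i : ℕ) : ℕ :=
  Module.finrank (ZMod 2) (LinearMap.ker (bdry2 K i)) -
    Module.finrank (ZMod 2) (LinearMap.range (bdry2 K (i + 1)))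

/-- Signed incidence coefficient (with respect to an arbitrary, but fixed,
linear order on the vertices; reduced homology does not depend on the choice). -/
noncomputable def coeffInt (σ τ : Finset V) : ℤ :=
  letI : LinearOrder V := IsWellOrder.linearOrder WellOrderingRel
  (σ \ τ).sum fun v => (-1 : ℤ) ^ ((σ.filter fun u => u < v).card)

/-- The integral boundary operator, from chains on faces of cardinality `n+1`
to chains on faces of cardinality `n`. -/
noncomputable def bdryZ (K : Finset (Finset V)) (n : ℕ) :
    (↥(kfaces K (n + 1)) → ℤ) →ₗ[ℤ] (↥(kfaces K n) → ℤ) :=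
  Matrix.mulVecLin (Matrix.of fun (τ : ↥(kfaces K n)) (σ : ↥(kfaces K (n + 1))) =>
    if (τ : Finset V) ⊆ (σ : Finset V) then coeffInt (σ : Finset V) (τ : Finset V) else 0)

/-- `K` has trivial reduced (integral) homology: `H̃ₙ(K; ℤ) = 0` for all
`n ≥ -1`. -/
def TrivialRedHomology (K : Finset (Finset V)) : Prop :=
  K.Nonempty ∧ LinearMap.range (bdryZ K 0) = ⊤ ∧
    ∀ n : ℕ, LinearMap.ker (bdryZ K n) = LinearMap.range (bdryZ K (n + 1))

/-- Reduced Euler characteristic. -/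
def redEuler (K : Finset (Finset V)) : ℤ :=
  (∑ σ ∈ K.filter fun σ => σ ≠ ∅, (-1 : ℤ) ^ (σ.card - 1)) - 1

/-! Let `W = {w₁ ≺ ⋯ ≺ wₙ}` induce a star decomposition of `X`, and let `Xᵢ` be the union of the
stars of `wᵢ, …, wₙ`, so that `X₁ = X` and `Xₙ` is a cone over the vertex decomposable link of `wₙ`.
Passing from `Xᵢ` to `Xᵢ₊₁` removes the open star of `wᵢ` and of those vertices of `lk wᵢ` that lie
outside the overlap `lk wᵢ ∩ Xᵢ₊₁`. By induction on the dimension, `lk wᵢ` can be shed, vertex by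
vertex, down to this overlap, and the overlap is vertex decomposable. The same vertices are shed
from `Xᵢ`, their links being cones with apex `wᵢ` over the links in `lk wᵢ`; afterwards the link of
`wᵢ` is the overlap, and `wᵢ` itself is shed. The induction has to carry along that `X` can be shed
down to the union of the stars of `X₀`, since this is what it uses about the links. -/

theorem mem_lk_singleton {v : V} {K : Finset (Finset V)} {τ : Finset V} :
    τ ∈ lk {v} K ↔ v ∉ τ ∧ insert v τ ∈ K := by
  simp only [lk, mem_image, mem_filter, singleton_subset_iff, sdiff_singleton_eq_erase]
  constructor
  · rintro ⟨σ, ⟨hσ, hv⟩, rfl⟩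
    exact ⟨notMem_erase v σ, by rwa [insert_erase hv]⟩
  · rintro ⟨hv, hτ⟩
    exact ⟨insert v τ, ⟨hτ, mem_insert_self v τ⟩, erase_insert hv⟩

theorem mem_deleteV {v : V} {K : Finset (Finset V)} {τ : Finset V} :
    τ ∈ deleteV v K ↔ τ ∈ K ∧ v ∉ τ := by
  simp [deleteV]

theorem mem_star_singleton {w : V} {K : Finset (Finset V)} {τ : Finset V} :
    τ ∈ star {w} K ↔ τ ∈ K ∧ insert w τ ∈ K := by
  simp [star, union_singleton]

theorem mem_starSet {S : Finset V} {K : Finset (Finset V)} {τ : Finset V} :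
    τ ∈ starSet S K ↔ τ ∈ K ∧ ∃ v ∈ S, insert v τ ∈ K := by
  simp [starSet, union_singleton]

theorem mem_verts {v : V} {K : Finset (Finset V)} : v ∈ verts K ↔ ∃ σ ∈ K, v ∈ σ := by
  simp [verts, mem_sup]

theorem notMem_verts {v : V} {K : Finset (Finset V)} : v ∉ verts K ↔ ∀ σ ∈ K, v ∉ σ := by
  simp [mem_verts]

theorem verts_mono {K K' : Finset (Finset V)} (h : K ⊆ K') : verts K ⊆ verts K' :=
  sup_mono h

theorem verts_lk_subset (v : V) (K : Finset (Finset V)) : verts (lk {v} K) ⊆ verts K := by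
  intro x hx
  obtain ⟨σ, hσ, hxσ⟩ := mem_verts.1 hx
  exact mem_verts.2 ⟨insert v σ, (mem_lk_singleton.1 hσ).2, mem_insert_of_mem hxσ⟩

theorem notMem_verts_lk_self (v : V) (K : Finset (Finset V)) : v ∉ verts (lk {v} K) :=
  notMem_verts.2 fun _ hσ => (mem_lk_singleton.1 hσ).1

theorem deleteV_subset (v : V) (K : Finset (Finset V)) : deleteV v K ⊆ K :=
  filter_subset _ _

theorem deleteV_union (v : V) (K K' : Finset (Finset V)) :
    deleteV v (K ∪ K') = deleteV v K ∪ deleteV v K' :=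
  filter_union _ _ _

theorem lk_union (σ : Finset V) (K K' : Finset (Finset V)) :
    lk σ (K ∪ K') = lk σ K ∪ lk σ K' := by
  simp only [lk, filter_union, image_union]

theorem deleteV_eq_self {v : V} {K : Finset (Finset V)} (hv : v ∉ verts K) : deleteV v K = K :=
  filter_true_of_mem (notMem_verts.1 hv)

theorem lk_singleton_eq_empty {v : V} {K : Finset (Finset V)} (hv : v ∉ verts K) :
    lk {v} K = ∅ :=
  eq_empty_of_forall_notMem fun τ hτ =>
    notMem_verts.1 hv _ (mem_lk_singleton.1 hτ).2 (mem_insert_self v τ)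

theorem starSet_empty (K : Finset (Finset V)) : starSet ∅ K = ∅ := by
  simp [starSet]

theorem starSet_insert (w : V) (S : Finset V) (K : Finset (Finset V)) :
    starSet (insert w S) K = starSet S K ∪ star {w} K := by
  ext τ
  simp only [mem_union, mem_starSet, mem_star_singleton, exists_mem_insert]
  rw [← and_or_left, or_comm]

theorem IsCplx.mem_verts_iff {K : Finset (Finset V)} (hK : IsCplx K) {v : V} :
    v ∈ verts K ↔ {v} ∈ K := by
  rw [mem_verts]
  constructor
  · rintro ⟨σ, hσ, hv⟩
    exact hK σ hσ {v} (singleton_subset_iff.2 hv)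
  · exact fun hv => ⟨{v}, hv, mem_singleton_self v⟩

protected theorem IsCplx.lk {K : Finset (Finset V)} (hK : IsCplx K) (v : V) :
    IsCplx (lk {v} K) := by
  intro σ hσ τ hτ
  rw [mem_lk_singleton] at hσ ⊢
  exact ⟨fun h => hσ.1 (hτ h), hK _ hσ.2 _ (insert_subset_insert v hτ)⟩

protected theorem IsCplx.starSet {K : Finset (Finset V)} (hK : IsCplx K) (S : Finset V) :
    IsCplx (starSet S K) := by
  intro σ hσ τ hτ
  obtain ⟨hσK, s, hs, hsσ⟩ := mem_starSet.1 hσ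
  exact mem_starSet.2 ⟨hK σ hσK τ hτ, s, hs, hK _ hsσ _ (insert_subset_insert s hτ)⟩

theorem IsCplx.empty_mem_starSet {K : Finset (Finset V)} (hK : IsCplx K) {S : Finset V}
    (hS : S.Nonempty) (hSK : S ⊆ verts K) : ∅ ∈ starSet S K := by
  obtain ⟨s, hs⟩ := hS
  have hsK : {s} ∈ K := hK.mem_verts_iff.1 (hSK hs)
  exact mem_starSet.2 ⟨hK _ hsK _ (empty_subset _), s, hs, hsK⟩

theorem StarPartition.starSet_eq {W : Finset V} {X : Finset (Finset V)}
    (h : StarPartition W X) : starSet W X = X :=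
  filter_true_of_mem h.1

theorem StarPartition.notMem_verts_starSet {W S : Finset V} {X : Finset (Finset V)}
    (h : StarPartition W X) {w : V} (hw : w ∈ W) (hS : S ⊆ W) (hwS : w ∉ S) :
    w ∉ verts (starSet S X) := by
  refine notMem_verts.2 fun σ hσ hwσ => ?_
  obtain ⟨-, s, hs, hsσ⟩ := mem_starSet.1 hσ
  exact h.2 w hw s (hS hs) (ne_of_mem_of_not_mem hs hwS).symm
    ⟨insert s σ, hsσ, mem_insert_of_mem hwσ, mem_insert_self s σ⟩

/-! ### Purity -/

theorem PureDim.dim_eq {α : Type*} {K : Finset (Finset α)} {d : ℤ} (h : PureDim K d) :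
    dim K = d := by
  obtain ⟨⟨σ, hσ⟩, hle, hex⟩ := h
  obtain ⟨τ, hτ, -, hcard⟩ := hex σ hσ
  have hsup : K.sup Finset.card = τ.card := by
    refine le_antisymm (Finset.sup_le fun ρ hρ => ?_) (le_sup (f := Finset.card) hτ)
    have := hle ρ hρ
    omega
  rw [dim, hsup, hcard, add_sub_cancel_right]

theorem PureDim.union {K K' : Finset (Finset V)} {d : ℤ} (h : PureDim K d)
    (h' : PureDim K' d) : PureDim (K ∪ K') d := by
  refine ⟨h.1.mono subset_union_left, fun σ hσ => ?_, fun σ hσ => ?_⟩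
  · exact (mem_union.1 hσ).elim (h.2.1 σ) (h'.2.1 σ)
  · rcases mem_union.1 hσ with hσ | hσ
    · obtain ⟨τ, hτ, hστ⟩ := h.2.2 σ hσ
      exact ⟨τ, mem_union_left _ hτ, hστ⟩
    · obtain ⟨τ, hτ, hστ⟩ := h'.2.2 σ hσ
      exact ⟨τ, mem_union_right _ hτ, hστ⟩

protected theorem PureDim.lk {K : Finset (Finset V)} {d : ℤ} (h : PureDim K d) {v : V}
    (hv : {v} ∈ K) : PureDim (lk {v} K) (d - 1) := by
  refine ⟨⟨∅, mem_lk_singleton.2 ⟨notMem_empty v, hv⟩⟩, fun σ hσ => ?_, fun σ hσ => ?_⟩ <;>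
    obtain ⟨hvσ, hσK⟩ := mem_lk_singleton.1 hσ
  · have := h.2.1 _ hσK
    rw [card_insert_of_notMem hvσ] at this
    omega
  · obtain ⟨τ, hτ, hστ, hcard⟩ := h.2.2 _ hσK
    obtain ⟨hvτ, hστ⟩ := insert_subset_iff.1 hστ
    refine ⟨τ.erase v, mem_lk_singleton.2 ⟨notMem_erase v τ, by rwa [insert_erase hvτ]⟩,
      subset_erase.2 ⟨hστ, hvσ⟩, ?_⟩
    have := card_erase_add_one hvτ
    omega

protected theorem PureDim.starSet {K : Finset (Finset V)} {d : ℤ} (h : PureDim K d)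
    {S : Finset V} (hS : (starSet S K).Nonempty) : PureDim (starSet S K) d := by
  refine ⟨hS, fun σ hσ => h.2.1 σ (mem_starSet.1 hσ).1, fun σ hσ => ?_⟩
  obtain ⟨-, s, hs, hsσ⟩ := mem_starSet.1 hσ
  obtain ⟨τ, hτ, hsub, hcard⟩ := h.2.2 _ hsσ
  obtain ⟨hsτ, hστ⟩ := insert_subset_iff.1 hsub
  exact ⟨τ, mem_starSet.2 ⟨hτ, s, hs, by rwa [insert_eq_of_mem hsτ]⟩, hστ, hcard⟩

theorem pureDim_of_deleteV_of_lk {K : Finset (Finset V)} {d : ℤ} {v : V}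
    (hdel : PureDim (deleteV v K) d) (hlk : PureDim (lk {v} K) (d - 1)) : PureDim K d := by
  have erase_mem_lk {σ : Finset V} (hσ : σ ∈ K) (hv : v ∈ σ) : σ.erase v ∈ lk {v} K :=
    mem_lk_singleton.2 ⟨notMem_erase v σ, by rwa [insert_erase hv]⟩
  refine ⟨hdel.1.mono (deleteV_subset v K), fun σ hσ => ?_, fun σ hσ => ?_⟩ <;>
    by_cases hv : v ∈ σ
  · have hle := hlk.2.1 _ (erase_mem_lk hσ hv)
    have := card_erase_add_one hv
    omega
  · exact hdel.2.1 σ (mem_deleteV.2 ⟨hσ, hv⟩)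
  · obtain ⟨τ, hτ, hsub, hcard⟩ := hlk.2.2 _ (erase_mem_lk hσ hv)
    obtain ⟨hvτ, hτK⟩ := mem_lk_singleton.1 hτ
    refine ⟨insert v τ, hτK, subset_insert_iff.2 hsub, ?_⟩
    rw [card_insert_of_notMem hvτ]
    omega
  · obtain ⟨τ, hτ, hστ⟩ := hdel.2.2 σ (mem_deleteV.2 ⟨hσ, hv⟩)
    exact ⟨τ, deleteV_subset v K hτ, hστ⟩

theorem VD.of_pureDim {K : Finset (Finset V)} {d : ℤ} (hK : PureDim K d) {v : V}
    (hv : {v} ∈ K) (hdel : PureDim (deleteV v K) d) (hVDdel : VD (deleteV v K))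
    (hVDlk : VD (lk {v} K)) : VD K := by
  obtain rfl := hK.dim_eq
  exact VD.shed K v hv hdel hVDdel (hK.lk hv) hVDlk

/-! ### Cones -/

/-- The cone `w * K` with apex `w`. The apex is meant to be a vertex outside `K`, which is a
hypothesis of the lemmas that depend on it. -/
def cone (w : V) (K : Finset (Finset V)) : Finset (Finset V) :=
  K ∪ K.image (insert w)

theorem subset_cone (w : V) (K : Finset (Finset V)) : K ⊆ cone w K :=
  subset_union_left

theorem insert_mem_cone (w : V) {K : Finset (Finset V)} {σ : Finset V} (hσ : σ ∈ K) :
    insert w σ ∈ cone w K :=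
  mem_union_right _ (mem_image_of_mem _ hσ)

theorem mem_cone {w : V} {K : Finset (Finset V)} (hw : w ∉ verts K) {τ : Finset V} :
    τ ∈ cone w K ↔ τ.erase w ∈ K := by
  constructor
  · intro hτ
    rcases mem_union.1 hτ with hτ | hτ
    · rwa [erase_eq_of_notMem (notMem_verts.1 hw τ hτ)]
    · obtain ⟨σ, hσ, rfl⟩ := mem_image.1 hτ
      rwa [erase_insert (notMem_verts.1 hw σ hσ)]
  · intro hτ
    by_cases hwτ : w ∈ τ
    · exact insert_erase hwτ ▸ insert_mem_cone w hτ
    · exact subset_cone w K (erase_eq_of_notMem hwτ ▸ hτ)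

theorem cone_powerset (w : V) (σ : Finset V) : cone w σ.powerset = (insert w σ).powerset :=
  (powerset_insert σ w).symm

theorem star_singleton_eq_cone_lk {K : Finset (Finset V)} (hK : IsCplx K) (w : V) :
    star {w} K = cone w (lk {w} K) := by
  ext τ
  have insert_erase_eq : insert w (τ.erase w) = insert w τ := by grind
  rw [mem_star_singleton, mem_cone (notMem_verts_lk_self w K), mem_lk_singleton,
    insert_erase_eq]
  exact ⟨fun h => ⟨notMem_erase w τ, h.2⟩, fun h => ⟨hK _ h.2 τ (subset_insert w τ), h.2⟩⟩

theorem deleteV_cone {v w : V} (h : v ≠ w) (K : Finset (Finset V)) :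
    deleteV v (cone w K) = cone w (deleteV v K) := by
  simp [deleteV, cone, filter_union, filter_image, h]

theorem lk_cone {v w : V} (h : v ≠ w) (K : Finset (Finset V)) :
    lk {v} (cone w K) = cone w (lk {v} K) := by
  have insert_sdiff (τ : Finset V) : insert w τ \ {v} = insert w (τ \ {v}) :=
    insert_sdiff_of_notMem τ (by simpa using h.symm)
  simp [lk, cone, filter_union, filter_image, image_union, image_image, Function.comp_def,
    insert_sdiff, h]

theorem deleteV_cone_self {w : V} {K : Finset (Finset V)} (hw : w ∉ verts K) :
    deleteV w (cone w K) = K := by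
  rw [cone, deleteV_union, deleteV_eq_self hw, union_eq_left]
  intro τ hτ
  obtain ⟨hτ, hwτ⟩ := mem_deleteV.1 hτ
  obtain ⟨σ, -, rfl⟩ := mem_image.1 hτ
  exact absurd (mem_insert_self w σ) hwτ

theorem lk_cone_self {w : V} {K : Finset (Finset V)} (hw : w ∉ verts K) :
    lk {w} (cone w K) = K := by
  ext τ
  rw [mem_lk_singleton, mem_cone hw]
  constructor
  · rintro ⟨hwτ, hτ⟩
    rwa [erase_insert hwτ] at hτ
  · intro hτ
    have hwτ := notMem_verts.1 hw τ hτ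
    exact ⟨hwτ, by rwa [erase_insert hwτ]⟩

protected theorem PureDim.cone {K : Finset (Finset V)} {d : ℤ} (h : PureDim K d) {w : V}
    (hw : w ∉ verts K) : PureDim (cone w K) (d + 1) := by
  refine ⟨h.1.mono (subset_cone w K), fun τ hτ => ?_, fun τ hτ => ?_⟩
  · have hle := h.2.1 _ ((mem_cone hw).1 hτ)
    have := pred_card_le_card_erase (s := τ) (a := w)
    omega
  · obtain ⟨ρ, hρ, hsub, hcard⟩ := h.2.2 _ ((mem_cone hw).1 hτ)
    refine ⟨insert w ρ, insert_mem_cone w hρ, subset_insert_iff.2 hsub, ?_⟩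
    rw [card_insert_of_notMem (notMem_verts.1 hw ρ hρ), Nat.cast_succ, hcard]

protected theorem VD.cone {K : Finset (Finset V)} (h : VD K) {w : V} (hw : w ∉ verts K) :
    VD (cone w K) := by
  induction h with
  | simplex σ => exact cone_powerset w σ ▸ VD.simplex _
  | shed K v hv hdel _ hlk _ ih_del ih_lk =>
    have hvw : v ≠ w := by
      rintro rfl
      exact notMem_verts.1 hw _ hv (mem_singleton_self v)
    have hw_del : w ∉ verts (deleteV v K) := fun h => hw (verts_mono (deleteV_subset v K) h)
    have hw_lk : w ∉ verts (lk {v} K) := fun h => hw (verts_lk_subset v K h)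
    refine VD.of_pureDim ((pureDim_of_deleteV_of_lk hdel hlk).cone hw) (subset_cone w K hv) ?_ ?_ ?_
    · exact deleteV_cone hvw K ▸ hdel.cone hw_del
    · exact deleteV_cone hvw K ▸ ih_del hw_del
    · exact lk_cone hvw K ▸ ih_lk hw_lk

/-! ### Shedding -/

/-- `K'` is obtained from `K` by deleting a shedding vertex, inside the class of pure
`d`-dimensional complexes. Purity of the link is omitted, as it follows from that of `K`. -/
def ShedStep (d : ℤ) (K K' : Finset (Finset V)) : Prop :=
  ∃ v, {v} ∈ K ∧ VD (lk {v} K) ∧ deleteV v K = K' ∧ PureDim K' d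

/-- `K` can be shed down to `K'`: deleting shedding vertices of pure `d`-dimensional complexes
one after the other leads from `K` to `K'`. -/
def Sheds (d : ℤ) : Finset (Finset V) → Finset (Finset V) → Prop :=
  Relation.ReflTransGen (ShedStep d)

theorem Sheds.subset {d : ℤ} {K K' : Finset (Finset V)} (h : Sheds d K K') : K' ⊆ K := by
  induction h with
  | refl => exact Subset.rfl
  | tail _ hstep ih =>
    obtain ⟨v, -, -, rfl, -⟩ := hstep
    exact (deleteV_subset v _).trans ih

theorem Sheds.vd {d : ℤ} {K K' : Finset (Finset V)} (h : Sheds d K K') (hK : PureDim K d)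
    (hK' : VD K') : VD K := by
  induction h using Relation.ReflTransGen.head_induction_on with
  | refl => exact hK'
  | head hstep _ ih =>
    obtain ⟨v, hv, hVDlk, rfl, hdel⟩ := hstep
    exact VD.of_pureDim hK hv hdel (ih hdel) hVDlk

theorem ShedStep.union_cone {d : ℤ} {A K K' : Finset (Finset V)} (h : ShedStep d K K') {w : V}
    (hA : PureDim A (d + 1)) (hw : w ∉ verts K) (hsub : K ∩ A ⊆ K') (hAc : IsCplx A) :
    ShedStep (d + 1) (A ∪ cone w K) (A ∪ cone w K') := by
  obtain ⟨v, hv, hVDlk, rfl, hdel⟩ := h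
  have hvw : v ≠ w := by
    rintro rfl
    exact notMem_verts.1 hw _ hv (mem_singleton_self v)
  have hvA : v ∉ verts A := fun hvA =>
    have hv_del := hsub (mem_inter.2 ⟨hv, hAc.mem_verts_iff.1 hvA⟩)
    (mem_deleteV.1 hv_del).2 (mem_singleton_self v)
  refine ⟨v, mem_union_right _ (subset_cone w K hv), ?_, ?_, ?_⟩
  · rw [lk_union, lk_singleton_eq_empty hvA, empty_union, lk_cone hvw]
    exact hVDlk.cone fun h => hw (verts_lk_subset v K h)
  · rw [deleteV_union, deleteV_eq_self hvA, deleteV_cone hvw]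
  · exact hA.union (hdel.cone fun h => hw (verts_mono (deleteV_subset v K) h))

theorem shedStep_union_cone_of_subset {d : ℤ} {A O : Finset (Finset V)} {w : V}
    (hA : PureDim A d) (hwA : w ∉ verts A) (hOA : O ⊆ A) (hO : ∅ ∈ O) (hVD : VD O) :
    ShedStep d (A ∪ cone w O) A := by
  have hwO : w ∉ verts O := fun h => hwA (verts_mono hOA h)
  refine ⟨w, mem_union_right _ (insert_mem_cone w hO), ?_, ?_, hA⟩
  · rwa [lk_union, lk_singleton_eq_empty hwA, empty_union, lk_cone_self hwO]
  · rw [deleteV_union, deleteV_eq_self hwA, deleteV_cone_self hwO, union_eq_left.2 hOA]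

theorem Sheds.union_cone {d : ℤ} {A Y : Finset (Finset V)} {w : V} (h : Sheds d Y (Y ∩ A))
    (hVD : VD (Y ∩ A)) (hempty : ∅ ∈ Y ∩ A) (hA : PureDim A (d + 1)) (hAc : IsCplx A)
    (hwA : w ∉ verts A) (hwY : w ∉ verts Y) : Sheds (d + 1) (A ∪ cone w Y) A := by
  have sheds_of_subset {K : Finset (Finset V)} (hK : Sheds d K (Y ∩ A)) (hKY : K ⊆ Y) :
      Sheds (d + 1) (A ∪ cone w K) A := by
    induction hK using Relation.ReflTransGen.head_induction_on with
    | refl =>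
      exact .single (shedStep_union_cone_of_subset hA hwA inter_subset_right hempty hVD)
    | @head K K' hstep hK' ih =>
      have hK'K : K' ⊆ K := Sheds.subset (.single hstep)
      have hsub : K ∩ A ⊆ K' := (inter_subset_inter_right hKY).trans (Sheds.subset hK')
      exact .head (hstep.union_cone hA (fun h => hwY (verts_mono hKY h)) hsub hAc)
        (ih (hK'K.trans hKY))
  exact sheds_of_subset h Subset.rfl

/-! ### Star decompositions -/

theorem sheds_starSet_insert {d : ℤ} {X : Finset (Finset V)} {w : V} {W : Finset V}
    (hX : IsCplx X) (hpure : PureDim X (d + 1)) (hsub : insert w W ⊆ verts X)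
    (hW : W.Nonempty) (hw : w ∉ verts (starSet W X))
    (hsheds : Sheds d (lk {w} X) (overlap X w W)) (hVD : VD (overlap X w W)) :
    Sheds (d + 1) (starSet (insert w W) X) (starSet W X) := by
  obtain ⟨hwX, hWX⟩ := insert_subset_iff.1 hsub
  have hempty_lk : ∅ ∈ lk {w} X := mem_lk_singleton.2 ⟨notMem_empty w, hX.mem_verts_iff.1 hwX⟩
  have hempty_star : ∅ ∈ starSet W X := hX.empty_mem_starSet hW hWX
  rw [starSet_insert, star_singleton_eq_cone_lk hX]
  exact hsheds.union_cone hVD (mem_inter.2 ⟨hempty_lk, hempty_star⟩)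
    (hpure.starSet ⟨∅, hempty_star⟩) (hX.starSet W) hw (notMem_verts_lk_self w X)

theorem toFinset_drop_subset (L : List V) (i : ℕ) : (L.drop i).toFinset ⊆ L.toFinset :=
  fun _ hv => List.mem_toFinset.2 (List.mem_of_mem_drop (List.mem_toFinset.1 hv))

theorem toFinset_drop_nonempty {L : List V} {i : ℕ} (hi : i < L.length) :
    (L.drop i).toFinset.Nonempty := by
  simpa [List.toFinset_nonempty_iff] using hi

theorem toFinset_drop_eq_insert {L : List V} {i : ℕ} (hi : i < L.length) :
    (L.drop i).toFinset = insert L[i] (L.drop (i + 1)).toFinset := by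
  rw [List.drop_eq_getElem_cons hi, List.toFinset_cons]

theorem getElem_notMem_toFinset_drop_succ {L : List V} (hL : L.Nodup) {i : ℕ}
    (hi : i < L.length) : L[i] ∉ (L.drop (i + 1)).toFinset := by
  have hdrop : (L.drop i).Nodup := hL.sublist (List.drop_sublist i L)
  rw [List.drop_eq_getElem_cons hi] at hdrop
  exact fun h => hdrop.notMem (List.mem_toFinset.1 h)

theorem sheds_starSet_drop {d : ℤ} {X : Finset (Finset V)} {L : List V}
    (hX : IsCplx X) (hpure : PureDim X (d + 1)) (hL : L.Nodup) (hsub : L.toFinset ⊆ verts X)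
    (hsp : StarPartition L.toFinset X)
    (hoverlap : ∀ i (hi : i + 1 < L.length),
      Sheds d (lk {L[i]} X) (overlap X L[i] (L.drop (i + 1)).toFinset) ∧
        VD (overlap X L[i] (L.drop (i + 1)).toFinset))
    {i j : ℕ} (hij : i ≤ j) (hj : j < L.length) :
    Sheds (d + 1) (starSet (L.drop i).toFinset X) (starSet (L.drop j).toFinset X) := by
  induction j, hij using Nat.le_induction with
  | base => exact .refl
  | succ j _ ih =>
    have hj' : j < L.length := Nat.lt_of_succ_lt hj
    obtain ⟨hsheds, hVD⟩ := hoverlap j hj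
    have hcons := toFinset_drop_eq_insert hj'
    have hnotMem := hsp.notMem_verts_starSet (List.mem_toFinset.2 (List.getElem_mem hj'))
      (toFinset_drop_subset L (j + 1)) (getElem_notMem_toFinset_drop_succ hL hj')
    refine (ih hj').trans ?_
    rw [hcons]
    exact sheds_starSet_insert hX hpure (hcons ▸ (toFinset_drop_subset L j).trans hsub)
      (toFinset_drop_nonempty hj) hnotMem hsheds hVD

theorem vd_starSet_singleton {X : Finset (Finset V)} (hX : IsCplx X) {w : V}
    (h : VD (lk {w} X)) : VD (starSet {w} X) := by
  rw [← insert_empty_eq, starSet_insert, starSet_empty, empty_union,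
    star_singleton_eq_cone_lk hX]
  exact h.cone (notMem_verts_lk_self w X)

theorem sheds_and_vd_starSet_drop {d : ℤ} {X : Finset (Finset V)} {L : List V}
    (hX : IsCplx X) (hpure : PureDim X (d + 1)) (hne : L ≠ []) (hL : L.Nodup)
    (hsub : L.toFinset ⊆ verts X) (hsp : StarPartition L.toFinset X)
    (hoverlap : ∀ i (hi : i + 1 < L.length),
      Sheds d (lk {L[i]} X) (overlap X L[i] (L.drop (i + 1)).toFinset) ∧
        VD (overlap X L[i] (L.drop (i + 1)).toFinset))
    (hlast : VD (lk {L.getLast hne} X)) {i : ℕ} (hi : i < L.length) :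
    Sheds (d + 1) X (starSet (L.drop i).toFinset X) ∧ VD (starSet (L.drop i).toFinset X) := by
  constructor
  · have h := sheds_starSet_drop hX hpure hL hsub hsp hoverlap (Nat.zero_le i) hi
    rwa [List.drop_zero, hsp.starSet_eq] at h
  · have hpure_drop : PureDim (starSet (L.drop i).toFinset X) (d + 1) :=
      hpure.starSet ⟨∅, hX.empty_mem_starSet (toFinset_drop_nonempty hi)
        ((toFinset_drop_subset L i).trans hsub)⟩
    have h := sheds_starSet_drop hX hpure hL hsub hsp hoverlap
      (Nat.le_sub_one_of_lt hi) (Nat.sub_one_lt_of_lt hi)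
    refine h.vd hpure_drop ?_
    rw [List.drop_length_sub_one hne, List.toFinset_cons, List.toFinset_nil, insert_empty_eq]
    exact vd_starSet_singleton hX hlast

theorem StarDec.vd_and_sheds {X : Finset (Finset V)} {X₀ : Finset V} (h : StarDec X X₀)
    (hX : IsCplx X) :
    VD X ∧ (X₀.Nonempty → Sheds (dim X) X (starSet X₀ X) ∧ VD (starSet X₀ X)) := by
  induction h with
  | base => exact ⟨powerset_empty ▸ VD.simplex ∅, fun h => absurd h not_nonempty_empty⟩
  | step X X₀ k _ hpure L hne hL hsub hsp horder U hUne _ hUst _ Ulast _ ih ih_last =>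
    obtain ⟨d, rfl⟩ : ∃ d, k = d + 1 := ⟨k - 1, (sub_add_cancel k 1).symm⟩
    have hoverlap (i : ℕ) (hi : i + 1 < L.length) :
        Sheds d (lk {L[i]} X) (overlap X L[i] (L.drop (i + 1)).toFinset) ∧
          VD (overlap X L[i] (L.drop (i + 1)).toFinset) := by
      have hmem : {L[i]} ∈ X :=
        hX.mem_verts_iff.1 (hsub (List.mem_toFinset.2 (List.getElem_mem (Nat.lt_of_succ_lt hi))))
      have hdim : dim (lk {L[i]} X) = d := by
        rw [(hpure.lk hmem).dim_eq, add_sub_cancel_right]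
      have h := (ih i hi (hX.lk _)).2 (hUne i hi)
      rw [hUst i hi] at h
      exact hdim ▸ h
    have hdrop {i : ℕ} (hi : i < L.length) :=
      sheds_and_vd_starSet_drop hX hpure hne hL hsub hsp hoverlap (ih_last (hX.lk _)).1 hi
    rw [hpure.dim_eq]
    constructor
    · obtain ⟨hsheds, hVD⟩ := hdrop (List.length_pos_iff.2 hne)
      exact hsheds.vd hpure hVD
    · obtain ⟨i, hi, rfl⟩ := horder
      exact fun _ => hdrop hi

/-- Every star decomposable (pure) simplicial complex is vertex
decomposable. -/
theorem starDec_implies_VD {V : Type*} [DecidableEq V] (X : Finset (Finset V))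
    (hX : IsCplx X) (X₀ : Finset V) (h : StarDec X X₀) : VD X :=
  (h.vd_and_sheds hX).1

end Paper
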